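/- arXiv:math/9808107 — 2 statements merged into one kernel-verified Lean document; each statement's English description precedes it below -/
import Mathlib

section
/- For every positive integer n, the following identity holds in the formal power series ring ℚ[[x_1, …, x_n, t, v]]: ∑_λ f_λ(t,v) · det((x_i^{λ_j + n − j})_{1≤i,j≤n}) · ∏_{i=1}^n (1 − t x_i)(1 − v x_i) · ∏_{1 ≤ i < j ≤ n} (1 − x_i x_j) = ∏_{1 ≤ i < j ≤ n} (x_i − x_j), where the sum is over all partitions λ = (λ_1 ≥ ⋯ ≥ λ_n ≥ 0) with at most n parts (the family is summable, since for each monomial only finitely many λ contribute). Equivalently (Ishikawa–Wakayama): ∑_λ f_λ(t,v) s_λ(x_1,…,x_n) = ∏_{i=1}^n 1/((1 − t x_i)(1 − v x_i)) · ∏_{1 ≤ i < j ≤ n} 1/(1 − x_i x_j). -/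
/-- The power series ring `ℚ[[x_1,…,x_n,t,v]]`, with the variables indexed by
`Fin n ⊕ Fin 2` (`Sum.inl i` is `x_i`; `Sum.inr 0` is `t`; `Sum.inr 1` is `v`). -/
abbrev IWRing (n : ℕ) := MvPowerSeries (Fin n ⊕ Fin 2) ℚ

/-- The variable `x_i`. -/
noncomputable def IWx (n : ℕ) (i : Fin n) : IWRing n := MvPowerSeries.X (Sum.inl i)

/-- The variable `t`. -/
noncomputable def IWt (n : ℕ) : IWRing n := MvPowerSeries.X (Sum.inr 0)

/-- The variable `v`. -/
noncomputable def IWv (n : ℕ) : IWRing n := MvPowerSeries.X (Sum.inr 1)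

/-- The number `a_j = λ_j - λ_{j+1}` of columns of `λ` of length `j` (with
`λ_{n+1} = 0`), for a partition encoded as an antitone function `l : Fin n → ℕ`
(0-indexed, so `a_j` for the 1-indexed `j` is `IWa n l ⟨j-1,_⟩`). -/
def IWa (n : ℕ) (l : Fin n → ℕ) (j : Fin n) : ℕ :=
  l j - (if h : (j : ℕ) + 1 < n then l ⟨(j : ℕ) + 1, h⟩ else 0)

/-- The polynomial `f_λ(t,v) = ∏_{j odd} ∑_{r=0}^{a_j} t^r v^{a_j-r}
· ∏_{j even} ∑_{r=0}^{a_j} (tv)^r`, the 1-indexed column length `j` corresponding to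
the 0-indexed `j' : Fin n` with `j = j' + 1`. -/
noncomputable def IWf (n : ℕ) (l : Fin n → ℕ) : IWRing n :=
  ∏ j : Fin n,
    if Odd ((j : ℕ) + 1) then
      ∑ r ∈ Finset.range (IWa n l j + 1), IWt n ^ r * IWv n ^ (IWa n l j - r)
    else
      ∑ r ∈ Finset.range (IWa n l j + 1), (IWt n * IWv n) ^ r

section Algebra

variable {n : ℕ}

/-- Separating the factors that involve a fixed index `k` in a product over pairs `i < j`. -/
theorem prod_prod_Ioi_succAbove {M : Type*} [CommMonoid M] (g : Fin (n + 1) → Fin (n + 1) → M)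
    (k : Fin (n + 1)) :
    ∏ i, ∏ j ∈ Finset.Ioi i, g i j =
      (∏ i : Fin n, ∏ j ∈ Finset.Ioi i, g (k.succAbove i) (k.succAbove j)) *
        ∏ j : Fin n, if k < k.succAbove j then g k (k.succAbove j) else g (k.succAbove j) k := by
  have key : ∀ {m : ℕ} (h : Fin m → Fin m → M),
      ∏ i, ∏ j ∈ Finset.Ioi i, h i j = ∏ i, ∏ j, if i < j then h i j else 1 := by
    intro m h
    refine Finset.prod_congr rfl fun i _ => ?_
    rw [← Finset.prod_filter]
    congr 1
    ext j
    simp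
  rw [key, key, Fin.prod_univ_succAbove _ k]
  simp only [Fin.prod_univ_succAbove _ k, lt_irrefl, if_false, one_mul,
    Fin.succAbove_lt_succAbove_iff]
  rw [Finset.prod_mul_distrib, mul_left_comm, ← mul_assoc, mul_comm, ← Finset.prod_mul_distrib]
  congr 1
  refine Finset.prod_congr rfl fun j _ => ?_
  rcases lt_or_gt_of_ne (Fin.succAbove_ne k j) with h | h
  · simp [h, h.not_gt]
  · simp [h, h.not_gt]

theorem prod_prod_Ioi_symm_succAbove {M : Type*} [CommMonoid M]
    (g : Fin (n + 1) → Fin (n + 1) → M) (hg : ∀ i j, g i j = g j i) (k : Fin (n + 1)) :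
    ∏ i, ∏ j ∈ Finset.Ioi i, g i j =
      (∏ i : Fin n, ∏ j ∈ Finset.Ioi i, g (k.succAbove i) (k.succAbove j)) *
        ∏ j : Fin n, g k (k.succAbove j) := by
  rw [prod_prod_Ioi_succAbove g k]
  congr 1
  refine Finset.prod_congr rfl fun j _ => ?_
  split_ifs
  · rfl
  · exact hg _ _

theorem prod_prod_Ioi_sub_succAbove {R : Type*} [CommRing R] (x : Fin (n + 1) → R)
    (k : Fin (n + 1)) :
    ∏ i, ∏ j ∈ Finset.Ioi i, (x i - x j) =
      (-1) ^ ((k : ℕ) + n) *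
        (∏ i : Fin n, ∏ j ∈ Finset.Ioi i, (x (k.succAbove i) - x (k.succAbove j))) *
        ∏ j : Fin n, (x (k.succAbove j) - x k) := by
  rw [prod_prod_Ioi_succAbove _ k, mul_comm ((-1) ^ _), mul_assoc]
  congr 1
  have h : ∀ j : Fin n, (if k < k.succAbove j then x k - x (k.succAbove j)
      else x (k.succAbove j) - x k) =
      (if k < k.succAbove j then (-1) else 1) * (x (k.succAbove j) - x k) := by
    intro j
    split_ifs <;> ring
  rw [Finset.prod_congr rfl fun j _ => h j, Finset.prod_mul_distrib]
  congr 1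
  rw [← Finset.prod_filter, Finset.prod_const]
  have hcard : ({j : Fin n | k < k.succAbove j} : Finset (Fin n)).card = n - k := by
    have h1 : ({j : Fin n | k < k.succAbove j} : Finset (Fin n)) =
        ({j : Fin n | (k : ℕ) ≤ j} : Finset (Fin n)) := by
      ext j
      simp [Fin.lt_succAbove_iff_le_castSucc, Fin.le_def]
    have h2 := Finset.card_filter_add_card_filter_not (s := (Finset.univ : Finset (Fin n)))
      (fun j : Fin n => (j : ℕ) < k)
    rw [Fin.card_filter_val_lt] at h2
    simp only [not_lt, Finset.card_univ, Fintype.card_fin] at h2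
    rw [h1]
    have := k.is_lt
    omega
  rw [hcard]
  have hk := Nat.lt_succ_iff.mp k.is_lt
  have : (k : ℕ) + n = (n - k) + 2 * k := by omega
  rw [this, pow_add, pow_mul]
  simp

variable {F : Type*} [Field F]

theorem coeff_eq_sum_eval_div_prod_succAbove (x : Fin (n + 1) → F) (hx : Function.Injective x)
    (P : Polynomial F) (hP : P.natDegree ≤ n) :
    P.coeff n = ∑ k, P.eval (x k) / ∏ j : Fin n, (x k - x (k.succAbove j)) := by
  have h := Lagrange.coeff_eq_sum (s := Finset.univ) (v := x) hx.injOn (P := P)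
    (by
      rw [Finset.card_univ, Fintype.card_fin]
      exact lt_of_le_of_lt Polynomial.degree_le_natDegree (by exact_mod_cast Nat.lt_succ_of_le hP))
  simp only [Finset.card_univ, Fintype.card_fin, Nat.add_sub_cancel] at h
  rw [h]
  refine Finset.sum_congr rfl fun k _ => ?_
  congr 1
  rw [← Finset.compl_singleton, ← Fin.image_succAbove_univ,
    Finset.prod_image fun a _ b _ hab => Fin.succAbove_right_injective hab]

theorem sum_prod_succAbove_div (x : Fin (n + 1) → F) (hx : Function.Injective x)
    (h0 : ∀ i, x i ≠ 0) (h1 : ∀ i, 1 - x i ≠ 0) (h1' : ∀ i, 1 + x i ≠ 0) (h2 : (2 : F) ≠ 0)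
    (t v : F) :
    ∑ k, (1 - t * x k) * (1 - v * x k) *
        ∏ i : Fin n, (x (k.succAbove i) * (1 - x k * x (k.succAbove i)) /
          (x (k.succAbove i) - x k)) =
      if Odd (n + 1) then (1 - t * ∏ i, x i) * (1 - v * ∏ i, x i)
        else (1 - t * v * ∏ i, x i) * (1 - 1 * ∏ i, x i) := by
  set E := ∏ i, x i with hE
  have hE0 : E ≠ 0 := Finset.prod_ne_zero_iff.mpr fun i _ => h0 i
  let w : Fin (n + 3) → F := Fin.cons t (Fin.cons v x)
  let P : Polynomial F := ∏ i, (1 - Polynomial.C (w i) * Polynomial.X)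
  have hdeg : ∀ i, (1 - Polynomial.C (w i) * Polynomial.X).natDegree ≤ 1 := fun i => by
    compute_degree
  have hP : P.natDegree ≤ n + 3 := by
    refine (Polynomial.natDegree_prod_le _ _).trans
      ((Finset.sum_le_sum fun i _ => hdeg i).trans ?_)
    simp
  have hcoeff : P.coeff (n + 3) = t * v * (-1) ^ (n + 1) * E := by
    have := Polynomial.coeff_prod_of_natDegree_le (s := Finset.univ)
      (fun i => 1 - Polynomial.C (w i) * Polynomial.X) 1 fun i _ => hdeg i
    simp only [Finset.card_univ, Fintype.card_fin, mul_one] at this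
    rw [this]
    simp only [Polynomial.coeff_sub, Polynomial.coeff_one, Polynomial.coeff_C_mul,
      Polynomial.coeff_X_one, mul_one, one_ne_zero, if_false, zero_sub]
    rw [Fin.prod_univ_succ, Fin.prod_univ_succ, Finset.prod_neg]
    simp [w, hE]
    ring
  have heval : ∀ z, P.eval z = (1 - t * z) * (1 - v * z) * ∏ i, (1 - x i * z) := by
    intro z
    simp only [P, Polynomial.eval_prod]
    rw [Fin.prod_univ_succ, Fin.prod_univ_succ]
    simp [w, mul_assoc]
  let y : Fin (n + 4) → F := Fin.cons 0 (Fin.cons 1 (Fin.cons (-1) x))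
  have hy : Function.Injective y := by
    refine Fin.cons_injective_iff.mpr ⟨?_, Fin.cons_injective_iff.mpr
      ⟨?_, Fin.cons_injective_iff.mpr ⟨?_, hx⟩⟩⟩
    · rintro ⟨i, hi⟩
      induction i using Fin.cases with
      | zero => simp at hi
      | succ i =>
        induction i using Fin.cases with
        | zero => simp at hi
        | succ i => exact h0 i (by simpa using hi)
    · rintro ⟨i, hi⟩
      induction i using Fin.cases with
      | zero =>
        apply h2
        simp only [Fin.cons_zero] at hi
        linear_combination -hi
      | succ i => exact h1 i (by simp only [Fin.cons_succ] at hi; rw [hi]; ring)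
    · rintro ⟨i, hi⟩
      exact h1' i (by rw [hi]; ring)
  have key := coeff_eq_sum_eval_div_prod_succAbove y hy P hP
  rw [hcoeff] at key
  have hE2 : ∀ k, E = x k * ∏ i : Fin n, x (k.succAbove i) := fun k => by
    rw [hE, Fin.prod_univ_succAbove _ k]
  rw [Fin.sum_univ_succ, Fin.sum_univ_succ, Fin.sum_univ_succ] at key
  simp only [Fin.prod_univ_succ (n := n + 2), Fin.prod_univ_succ (n := n + 1),
    Fin.prod_univ_succ (n := n), Fin.succ_succAbove_zero, Fin.succ_succAbove_succ,
    Fin.zero_succAbove] at key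
  simp only [y, heval, Fin.cons_zero, Fin.cons_succ] at key
  have hA : ∏ i, (1 - x i) ≠ 0 := Finset.prod_ne_zero_iff.mpr fun i _ => h1 i
  have hB : ∏ i, (1 + x i) ≠ 0 := Finset.prod_ne_zero_iff.mpr fun i _ => h1' i
  have hat0 : (0 - x 0) * ∏ i : Fin n, (0 - x i.succ) = (-1) ^ (n + 1) * E := by
    rw [← Fin.prod_univ_succ fun i => 0 - x i, hE]
    simp [Finset.prod_neg]
  have hat1 : (1 - x 0) * ∏ i : Fin n, (1 - x i.succ) = ∏ i, (1 - x i) :=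
    (Fin.prod_univ_succ fun i => 1 - x i).symm
  have hatneg : (-1 - x 0) * ∏ i : Fin n, (-1 - x i.succ) =
      (-1) ^ (n + 1) * ∏ i, (1 + x i) := by
    rw [← Fin.prod_univ_succ fun i => -1 - x i]
    simp only [sub_eq_add_neg, ← neg_add, Finset.prod_neg]
    simp
  have hatk : ∀ k, ((1 - t * x k) * (1 - v * x k) * ∏ i, (1 - x i * x k)) /
      ((x k - 0) * ((x k - 1) * ((x k - -1) * ∏ j, (x k - x (k.succAbove j))))) =
      (-1) ^ (n + 1) / E * ((1 - t * x k) * (1 - v * x k) *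
        ∏ i : Fin n, (x (k.succAbove i) * (1 - x k * x (k.succAbove i)) /
          (x (k.succAbove i) - x k))) := by
    intro k
    have hk1 : x k - 1 ≠ 0 := fun h => h1 k (by linear_combination -h)
    have hk2 : x k + 1 ≠ 0 := fun h => h1' k (by linear_combination h)
    have hD : ∏ j, (x (k.succAbove j) - x k) ≠ 0 := Finset.prod_ne_zero_iff.mpr fun j _ =>
      sub_ne_zero.mpr (hx.ne (Fin.succAbove_ne k j))
    have hG : ∏ i : Fin n, x (k.succAbove i) ≠ 0 := Finset.prod_ne_zero_iff.mpr fun i _ => h0 _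
    have hneg : ∏ j, (x k - x (k.succAbove j)) =
        (-1) ^ n * ∏ j, (x (k.succAbove j) - x k) := by
      simp only [← neg_sub (x k), Finset.prod_neg, Finset.card_univ, Fintype.card_fin,
        ← mul_assoc, ← mul_pow]
      simp
    have hcomm : ∏ i : Fin n, (1 - x (k.succAbove i) * x k) =
        ∏ i : Fin n, (1 - x k * x (k.succAbove i)) :=
      Finset.prod_congr rfl fun i _ => by ring
    rw [hneg, Fin.prod_univ_succAbove _ k, hcomm, hE2 k, Finset.prod_div_distrib,
      Finset.prod_mul_distrib]
    have hn0 : ((-1 : F) ^ n) ≠ 0 := pow_ne_zero _ (by simp)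
    have hnn : ((-1 : F) ^ n) * (-1) ^ n = 1 := by rw [← mul_pow]; simp
    have hxk := h0 k
    rw [sub_neg_eq_add, sub_zero, pow_succ]
    field_simp
    linear_combination (-(1 - x k ^ 2) * (1 - t * x k) * (1 - v * x k) *
      ∏ i : Fin n, (1 - x k * x (k.succAbove i))) * hnn
  simp only [hat0, hat1, hatneg] at key
  rw [Finset.sum_congr rfl fun k _ => hatk k, ← Finset.mul_sum] at key
  set L := ∑ k, (1 - t * x k) * (1 - v * x k) *
    ∏ i : Fin n, (x (k.succAbove i) * (1 - x k * x (k.succAbove i)) /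
      (x (k.succAbove i) - x k))
  simp only [mul_zero, sub_zero, Finset.prod_const_one, mul_one, mul_neg, sub_neg_eq_add] at key
  have hc1 : (1 : F) + 1 ≠ 0 := by rwa [one_add_one_eq_two]
  have hc2 : (-1 : F) - 1 ≠ 0 := fun h => h2 (by linear_combination -h)
  split_ifs with hodd
  · rw [hodd.neg_one_pow] at key
    field_simp at key
    refine mul_left_cancel₀ (mul_ne_zero h2 h2) ?_
    linear_combination key
  · rw [(Nat.not_odd_iff_even.mp hodd).neg_one_pow] at key
    field_simp at key
    refine mul_left_cancel₀ (mul_ne_zero h2 h2) ?_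
    linear_combination -key

theorem sum_prod_prod_Ioi_sub_succAbove {R : Type*} [CommRing R] [IsDomain R]
    (x : Fin (n + 1) → R) (hx : Function.Injective x) (h0 : ∀ i, x i ≠ 0)
    (h1 : ∀ i, 1 - x i ≠ 0) (h1' : ∀ i, 1 + x i ≠ 0) (h2 : (2 : R) ≠ 0) (t v : R) :
    ∑ k : Fin (n + 1), (-1) ^ ((k : ℕ) + n) * (∏ i, x (k.succAbove i)) *
        (∏ i : Fin n, ∏ j ∈ Finset.Ioi i, (x (k.succAbove i) - x (k.succAbove j))) *
        ((1 - t * x k) * (1 - v * x k)) * ∏ i, (1 - x k * x (k.succAbove i)) =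
      (∏ i, ∏ j ∈ Finset.Ioi i, (x i - x j)) *
        if Odd (n + 1) then (1 - t * ∏ i, x i) * (1 - v * ∏ i, x i)
        else (1 - t * v * ∏ i, x i) * (1 - 1 * ∏ i, x i) := by
  obtain ⟨F, _, f, hinj⟩ : ∃ (F : Type _) (_ : Field F) (f : R →+* F), Function.Injective f :=
    ⟨FractionRing R, inferInstance, algebraMap R _, IsFractionRing.injective R _⟩
  have hne : ∀ {a : R}, a ≠ 0 → f a ≠ 0 := fun h =>
    (map_ne_zero_iff _ hinj).mpr h
  apply hinj
  have key := sum_prod_succAbove_div (fun i => f (x i)) (hinj.comp hx)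
    (fun i => hne (h0 i)) (fun i => by simpa using hne (h1 i))
    (fun i => by simpa using hne (h1' i)) (by have := hne h2; rwa [map_ofNat] at this)
    (f t) (f v)
  have hif : f (if Odd (n + 1) then (1 - t * ∏ i, x i) * (1 - v * ∏ i, x i)
        else (1 - t * v * ∏ i, x i) * (1 - 1 * ∏ i, x i)) =
      if Odd (n + 1) then (1 - f t * ∏ i, f (x i)) *
          (1 - f v * ∏ i, f (x i))
        else (1 - f t * f v * ∏ i, f (x i)) *
          (1 - 1 * ∏ i, f (x i)) := by
    split_ifs <;> simp [map_prod]
  rw [map_mul, hif, ← key, map_sum, Finset.mul_sum]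
  refine Finset.sum_congr rfl fun k _ => ?_
  rw [prod_prod_Ioi_sub_succAbove x k]
  simp only [map_mul, map_prod, map_sub, map_one, map_pow, map_neg, Finset.prod_div_distrib,
    Finset.prod_mul_distrib]
  have hD : ∏ j, (f (x (k.succAbove j)) - f (x k)) ≠ 0 :=
    Finset.prod_ne_zero_iff.mpr fun j _ =>
      sub_ne_zero.mpr ((hinj.comp hx).ne (Fin.succAbove_ne k j))
  field_simp

end Algebra

section Partitions

variable {R : Type*} [CommRing R]

/-- Partitions with at most `n` parts. -/
abbrev BoundedPartition (n : ℕ) := {l : Fin n → ℕ // ∀ i j : Fin n, i ≤ j → l j ≤ l i}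

/-- Removing the `b` columns of maximal length from a partition with at most `n + 1` parts leaves
a partition with at most `n` parts. -/
def boundedPartitionSuccEquiv (n : ℕ) : BoundedPartition (n + 1) ≃ BoundedPartition n × ℕ where
  toFun l := (⟨fun j => l.1 j.castSucc - l.1 (Fin.last n), fun i j hij =>
    Nat.sub_le_sub_right (l.2 _ _ (Fin.castSucc_le_castSucc_iff.mpr hij)) _⟩, l.1 (Fin.last n))
  invFun p := ⟨Fin.snoc (α := fun _ => ℕ) (fun j => p.1.1 j + p.2) p.2, fun i j hij => by
    induction j using Fin.lastCases with
    | last =>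
      induction i using Fin.lastCases with
      | last => exact le_rfl
      | cast i => simp
    | cast j =>
      induction i using Fin.lastCases with
      | last => exact absurd hij (Fin.castSucc_lt_last j).not_ge
      | cast i => simpa using p.1.2 i j (Fin.castSucc_le_castSucc_iff.mp hij)⟩
  left_inv l := by
    ext j
    induction j using Fin.lastCases with
    | last => simp
    | cast j => simpa using Nat.sub_add_cancel (l.2 _ _ (Fin.le_last j.castSucc))
  right_inv p := by
    ext <;> simp

theorem boundedPartitionSuccEquiv_symm_castSucc {n : ℕ} (p : BoundedPartition n × ℕ)
    (j : Fin n) : ((boundedPartitionSuccEquiv n).symm p).1 j.castSucc = p.1.1 j + p.2 := by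
  simp [boundedPartitionSuccEquiv]

theorem boundedPartitionSuccEquiv_symm_last {n : ℕ} (p : BoundedPartition n × ℕ) :
    ((boundedPartitionSuccEquiv n).symm p).1 (Fin.last n) = p.2 := by
  simp [boundedPartitionSuccEquiv]

/-- The weight of `a` columns of length `j`. -/
def columnWeight (t v : R) (j a : ℕ) : R :=
  if Odd j then ∑ r ∈ Finset.range (a + 1), t ^ r * v ^ (a - r)
  else ∑ r ∈ Finset.range (a + 1), (t * v) ^ r

/-- The polynomial `f_λ`, evaluated at elements `t`, `v` of an arbitrary ring. -/
def partitionWeight (t v : R) (n : ℕ) (l : Fin n → ℕ) : R :=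
  ∏ j : Fin n, columnWeight t v ((j : ℕ) + 1) (IWa n l j)

/-- The bialternant numerator `det (x_i ^ (λ_j + n - j))`. -/
def bialternant {n : ℕ} (x : Fin n → R) (l : Fin n → ℕ) : R :=
  Matrix.det (Matrix.of fun i j : Fin n => x i ^ (l j + (n - 1 - (j : ℕ))))

theorem partitionWeight_symm (t v : R) {n : ℕ} (p : BoundedPartition n × ℕ) :
    partitionWeight t v (n + 1) ((boundedPartitionSuccEquiv n).symm p).1 =
      partitionWeight t v n p.1.1 * columnWeight t v (n + 1) p.2 := by
  rw [partitionWeight, Fin.prod_univ_castSucc, partitionWeight]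
  congr 1
  · refine Finset.prod_congr rfl fun j _ => ?_
    congr 1
    simp only [IWa, boundedPartitionSuccEquiv_symm_castSucc, Fin.val_castSucc]
    have hj : (j : ℕ) + 1 < n + 1 := by omega
    rw [dif_pos hj]
    by_cases h : (j : ℕ) + 1 < n
    · have : (⟨(j : ℕ) + 1, hj⟩ : Fin (n + 1)) = Fin.castSucc ⟨(j : ℕ) + 1, h⟩ := rfl
      rw [dif_pos h, this, boundedPartitionSuccEquiv_symm_castSucc]
      omega
    · have : (⟨(j : ℕ) + 1, hj⟩ : Fin (n + 1)) = Fin.last n := by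
        ext
        simp only [Fin.val_last]
        omega
      rw [dif_neg h, this, boundedPartitionSuccEquiv_symm_last]
      omega
  · simp [IWa, boundedPartitionSuccEquiv_symm_last]

theorem bialternant_symm {n : ℕ} (x : Fin (n + 1) → R) (p : BoundedPartition n × ℕ) :
    bialternant x ((boundedPartitionSuccEquiv n).symm p).1 =
      (∑ k : Fin (n + 1), (-1) ^ ((k : ℕ) + n) * (∏ i, x (k.succAbove i)) *
        bialternant (fun i => x (k.succAbove i)) p.1.1) * (∏ i, x i) ^ p.2 := by
  rw [bialternant, Matrix.det_succ_column _ (Fin.last n), Finset.sum_mul]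
  refine Finset.sum_congr rfl fun k _ => ?_
  have hminor : (Matrix.of fun i j : Fin (n + 1) =>
      x i ^ (((boundedPartitionSuccEquiv n).symm p).1 j + (n + 1 - 1 - (j : ℕ)))).submatrix
        k.succAbove (Fin.last n).succAbove =
      Matrix.of fun i j => x (k.succAbove i) ^ (p.2 + 1) *
        (Matrix.of fun i j : Fin n => x (k.succAbove i) ^ (p.1.1 j + (n - 1 - (j : ℕ)))) i j := by
    ext i j
    simp only [Matrix.submatrix_apply, Matrix.of_apply, Fin.succAbove_last,
      boundedPartitionSuccEquiv_symm_castSucc, Fin.val_castSucc]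
    rw [← pow_add]
    congr 1
    omega
  rw [hminor, Matrix.det_mul_column, Finset.prod_pow, Matrix.of_apply,
    boundedPartitionSuccEquiv_symm_last, Fin.prod_univ_succAbove x k, bialternant]
  simp only [Fin.val_last, Nat.add_sub_cancel, Nat.sub_self, add_zero]
  ring

end Partitions

section Series

open scoped MvPowerSeries.WithPiTopology

variable {σ K : Type*} [Field K] [UniformSpace K] [DiscreteUniformity K]

instance nonarchimedeanRing_mvPowerSeries : NonarchimedeanRing (MvPowerSeries σ K) where
  is_nonarchimedean U hU := by
    obtain ⟨I, hI, hIU⟩ :=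
      (IsLinearTopology.hasBasis_open_ideal (R := MvPowerSeries σ K)).mem_iff.mp hU
    exact ⟨⟨I.toAddSubgroup, hI⟩, hIU⟩

theorem hasSum_complete_homogeneous (α β y : MvPowerSeries σ K)
    (hy : MvPowerSeries.constantCoeff y = 0) :
    ∃ U, HasSum (fun a : ℕ => (∑ r ∈ Finset.range (a + 1), α ^ r * β ^ (a - r)) * y ^ a) U ∧
      U * ((1 - α * y) * (1 - β * y)) = 1 := by
  have hα : MvPowerSeries.constantCoeff (α * y) = 0 := by simp [hy]
  have hβ : MvPowerSeries.constantCoeff (β * y) = 0 := by simp [hy]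
  have sα := MvPowerSeries.WithPiTopology.summable_pow_of_constantCoeff_eq_zero hα
  have sβ := MvPowerSeries.WithPiTopology.summable_pow_of_constantCoeff_eq_zero hβ
  have s := sα.mul_of_nonarchimedean sβ
  refine ⟨(∑' i, (α * y) ^ i) * ∑' i, (β * y) ^ i, ?_, ?_⟩
  · rw [sα.tsum_mul_tsum_eq_tsum_sum_range sβ s]
    have h : ∀ a, (∑ r ∈ Finset.range (a + 1), α ^ r * β ^ (a - r)) * y ^ a =
        ∑ r ∈ Finset.range (a + 1), (α * y) ^ r * (β * y) ^ (a - r) := by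
      intro a
      rw [Finset.sum_mul]
      refine Finset.sum_congr rfl fun r hr => ?_
      have hra : a = r + (a - r) := by
        have := Finset.mem_range.mp hr
        omega
      rw [mul_pow, mul_pow]
      nth_rewrite 2 [hra]
      rw [pow_add]
      ring
    simp only [h]
    exact (summable_sum_mul_range_of_summable_mul s).hasSum
  · have h1 := MvPowerSeries.WithPiTopology.tsum_pow_mul_one_sub_of_constantCoeff_eq_zero hα
    have h2 := MvPowerSeries.WithPiTopology.tsum_pow_mul_one_sub_of_constantCoeff_eq_zero hβ
    rw [mul_mul_mul_comm, h1, h2, one_mul]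

theorem hasSum_columnWeight (t v y : MvPowerSeries σ K) (hy : MvPowerSeries.constantCoeff y = 0)
    (j : ℕ) :
    ∃ U, HasSum (fun a : ℕ => columnWeight t v j a * y ^ a) U ∧
      U * (if Odd j then (1 - t * y) * (1 - v * y)
        else (1 - t * v * y) * (1 - 1 * y)) = 1 := by
  by_cases h : Odd j
  · simpa only [columnWeight, if_pos h] using hasSum_complete_homogeneous t v y hy
  · simpa only [columnWeight, if_neg h, one_pow, mul_one] using
      hasSum_complete_homogeneous (t * v) 1 y hy

theorem hasSum_partitionWeight_mul_bialternant [CharZero K] (t v : MvPowerSeries σ K) (n : ℕ)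
    (x : Fin n → MvPowerSeries σ K) (hx : Function.Injective x) (h0 : ∀ i, x i ≠ 0)
    (hc : ∀ i, MvPowerSeries.constantCoeff (x i) = 0) :
    ∃ S, HasSum (fun l : BoundedPartition n => partitionWeight t v n l.1 * bialternant x l.1) S ∧
      S * (∏ i, ((1 - t * x i) * (1 - v * x i))) *
        (∏ i, ∏ j ∈ Finset.Ioi i, (1 - x i * x j)) =
      ∏ i, ∏ j ∈ Finset.Ioi i, (x i - x j) := by
  induction n with
  | zero =>
    refine ⟨1, ?_, by simp⟩
    let l₀ : BoundedPartition 0 := ⟨Fin.elim0, fun i => i.elim0⟩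
    have : ∀ l : BoundedPartition 0, l = l₀ := fun l => Subsingleton.elim _ _
    convert hasSum_single l₀ fun l hl => absurd (this l) hl
    simp [partitionWeight, bialternant]
  | succ n ih =>
    have ih' := fun k : Fin (n + 1) => ih (fun i => x (k.succAbove i))
      (hx.comp Fin.succAbove_right_injective) (fun i => h0 _) (fun i => hc _)
    choose S hS hSmul using ih'
    obtain ⟨U, hU, hUmul⟩ := hasSum_columnWeight t v (∏ i, x i)
      (by rw [map_prod]; exact Finset.prod_eq_zero (Finset.mem_univ 0) (hc 0)) (n + 1)
    refine ⟨(∑ k : Fin (n + 1), (-1) ^ ((k : ℕ) + n) * (∏ i, x (k.succAbove i)) * S k) * U,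
      ?_, ?_⟩
    · rw [← (boundedPartitionSuccEquiv n).symm.hasSum_iff]
      have h := (hasSum_sum (s := Finset.univ) fun k _ =>
        (hS k).mul_left ((-1) ^ ((k : ℕ) + n) * (∏ i, x (k.succAbove i)))).mul_of_nonarchimedean hU
      refine (congrArg (HasSum · _) (funext fun p => ?_)).mpr h
      rw [Function.comp_apply, partitionWeight_symm, bialternant_symm, Finset.sum_mul,
        Finset.mul_sum, Finset.sum_mul]
      refine Finset.sum_congr rfl fun k _ => ?_
      ring
    · have : IsDomain (MvPowerSeries σ K) := NoZeroDivisors.to_isDomain _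
      have hV := sum_prod_prod_Ioi_sub_succAbove x hx h0
        (fun i h => by simpa [hc] using congrArg MvPowerSeries.constantCoeff h)
        (fun i h => by simpa [hc] using congrArg MvPowerSeries.constantCoeff h)
        (fun h => by
          have := congrArg MvPowerSeries.constantCoeff h
          rw [map_ofNat, map_zero] at this
          exact two_ne_zero this) t v
      set V := (if Odd (n + 1) then (1 - t * ∏ i, x i) * (1 - v * ∏ i, x i)
        else (1 - t * v * ∏ i, x i) * (1 - 1 * ∏ i, x i))
      have hT : (∑ k : Fin (n + 1), (-1) ^ ((k : ℕ) + n) * (∏ i, x (k.succAbove i)) * S k) *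
          (∏ i, ((1 - t * x i) * (1 - v * x i))) *
          (∏ i, ∏ j ∈ Finset.Ioi i, (1 - x i * x j)) =
          (∏ i, ∏ j ∈ Finset.Ioi i, (x i - x j)) * V := by
        rw [← hV, Finset.sum_mul, Finset.sum_mul]
        refine Finset.sum_congr rfl fun k _ => ?_
        rw [Fin.prod_univ_succAbove _ k, prod_prod_Ioi_symm_succAbove (fun i j => 1 - x i * x j)
          (fun i j => by rw [mul_comm]) k, ← hSmul k]
        ring
      linear_combination U * hT + (∏ i, ∏ j ∈ Finset.Ioi i, (x i - x j)) * hUmul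

/-- The Ishikawa–Wakayama identity for arbitrary power series `t`, `v` and distinct nonzero power
series `x_i` without constant term. -/
theorem hasSum_partitionWeight_mul_bialternant_mul_prod [CharZero K] (t v : MvPowerSeries σ K)
    (n : ℕ) (x : Fin n → MvPowerSeries σ K) (hx : Function.Injective x) (h0 : ∀ i, x i ≠ 0)
    (hc : ∀ i, MvPowerSeries.constantCoeff (x i) = 0) :
    HasSum (fun l : BoundedPartition n => partitionWeight t v n l.1 * bialternant x l.1 *
        (∏ i, ((1 - t * x i) * (1 - v * x i))) * ∏ i, ∏ j ∈ Finset.Ioi i, (1 - x i * x j))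
      (∏ i, ∏ j ∈ Finset.Ioi i, (x i - x j)) := by
  obtain ⟨S, hS, hmul⟩ := hasSum_partitionWeight_mul_bialternant t v n x hx h0 hc
  rw [← hmul]
  exact (hS.mul_right _).mul_right _

end Series

/-- **Ishikawa–Wakayama** (Theorem IV), with denominators cleared:
`∑_λ f_λ(t,v) det(x_i^{λ_j+n-j}) ∏_i (1-t x_i)(1-v x_i) ∏_{i<j} (1-x_i x_j)
 = ∏_{i<j} (x_i - x_j)` as a convergent sum in `ℚ[[x_1,…,x_n,t,v]]` (with the product
topology coming from the discrete topology on the coefficients).  Partitions with at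
most `n` parts are encoded as antitone functions `Fin n → ℕ`; with 0-indexed `j`, the
exponent `λ_j + n - j` becomes `l j + (n - 1 - j)`. -/
theorem ishikawa_wakayama (n : ℕ) (hn : 0 < n) :
    letI : TopologicalSpace ℚ := ⊥
    letI : TopologicalSpace (IWRing n) :=
      inferInstanceAs (TopologicalSpace ((Fin n ⊕ Fin 2 →₀ ℕ) → ℚ))
    HasSum
      (fun l : {l : Fin n → ℕ // ∀ i j : Fin n, i ≤ j → l j ≤ l i} =>
        IWf n l.1 *
          Matrix.det (Matrix.of fun i j : Fin n =>
            IWx n i ^ (l.1 j + (n - 1 - (j : ℕ)))) *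
          (∏ i : Fin n, ((1 - IWt n * IWx n i) * (1 - IWv n * IWx n i))) *
          ∏ i : Fin n, ∏ j ∈ Finset.Ioi i, (1 - IWx n i * IWx n j))
      (∏ i : Fin n, ∏ j ∈ Finset.Ioi i, (IWx n i - IWx n j)) := by
  let _ : UniformSpace ℚ := ⊥
  have : DiscreteUniformity ℚ := ⟨rfl⟩
  exact hasSum_partitionWeight_mul_bialternant_mul_prod (IWt n) (IWv n) n (IWx n)
    (fun i j hij => Sum.inl_injective (MvPowerSeries.X_inj.mp hij))
    (fun i h => by
      simpa [IWx] using congrArg (MvPowerSeries.coeff (Finsupp.single (Sum.inl i) 1)) h)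
    (fun i => MvPowerSeries.constantCoeff_X _)
end

section
/- For every positive integer n, the following identity holds in the formal power series ring ℚ[[x_1, …, x_n]]: ∑_λ det((x_i^{λ_j + n − j})_{1≤i,j≤n}) · ∏_{i=1}^n (1 − x_i) · ∏_{1 ≤ i < j ≤ n} (1 − x_i x_j) = ∏_{1 ≤ i < j ≤ n} (x_i − x_j), where the sum is over all partitions λ = (λ_1 ≥ ⋯ ≥ λ_n ≥ 0) with at most n parts (the family is summable, since for each monomial only finitely many λ contribute). Equivalently (Littlewood): ∑_λ s_λ(x_1,…,x_n) = ∏_i 1/(1 − x_i) · ∏_{i<j} 1/(1 − x_i x_j). -/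
section AlternantSum

open Finset

/-- Lagrange interpolation of `∏ k, (1 - t * x k)` at the nodes `x i`, `0` and `-1`. -/
theorem sum_one_sub_mul_prod_mul_div_sub {K : Type*} [Field K] {n : ℕ} (x : Fin (n + 1) → K)
    (hinj : Function.Injective x) (h0 : ∀ i, x i ≠ 0) (h1 : ∀ i, x i ≠ -1) :
    ∑ i, (1 - x i) * ∏ k : Fin n, (x (i.succAbove k) * (1 - x i * x (i.succAbove k)) /
      (x (i.succAbove k) - x i)) = 1 - ∏ i, x i := by
  classical
  let v : Fin (n + 3) → K := Fin.cons (-1) (Fin.cons 0 x)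
  let P : Polynomial K := ∏ k, (1 - Polynomial.X * Polynomial.C (x k))
  have hv : Function.Injective v := by
    refine Fin.cons_injective_iff.2 ⟨?_, Fin.cons_injective_iff.2 ⟨?_, hinj⟩⟩
    · rintro ⟨j, hj⟩
      induction j using Fin.cases with
      | zero => simp at hj
      | succ j => exact h1 j (by simpa using hj)
    · rintro ⟨j, hj⟩
      exact h0 j hj
  have hdeg : P.natDegree ≤ n + 1 := by
    refine (Polynomial.natDegree_prod_le _ _).trans ?_
    refine (Finset.sum_le_card_nsmul _ _ 1 fun k _ => ?_).trans (by simp)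
    compute_degree
  have hP : P.degree < #(univ : Finset (Fin (n + 3))) := by
    refine (Polynomial.degree_le_of_natDegree_le hdeg).trans_lt ?_
    simp only [card_univ, Fintype.card_fin]
    exact_mod_cast (by omega : n + 1 < n + 3)
  have key := Lagrange.coeff_eq_sum (s := univ) (v := v) hv.injOn hP
  rw [Polynomial.coeff_eq_zero_of_natDegree_lt (by simp; omega)] at key
  have herase : ∀ i : Fin (n + 3), ∏ j ∈ univ.erase i, (v i - v j) =
      ∏ k, (v i - v (i.succAbove k)) := by
    intro i
    rw [Fin.univ_succAbove _ i, Finset.erase_cons, Finset.prod_map]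
    rfl
  have hev : ∀ t, P.eval t = ∏ k, (1 - t * x k) := by
    intro t
    simp only [P, Polynomial.eval_prod, Polynomial.eval_sub, Polynomial.eval_one,
      Polynomial.eval_mul, Polynomial.eval_X, Polynomial.eval_C]
  simp only [herase, hev, Fin.sum_univ_succ (n := n + 2), Fin.sum_univ_succ (n := n + 1)] at key
  have hsq : (-1 : K) ^ n * (-1) ^ n = 1 := by simp [← mul_pow]
  have hX : ∏ k, x k ≠ 0 := prod_ne_zero_iff.2 fun k _ => h0 k
  have e0 : (∏ k, (1 - v 0 * x k)) / ∏ k, (v 0 - v ((0 : Fin (n + 3)).succAbove k)) =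
      (-1) ^ n := by
    have h : ∏ k, (1 + x k) ≠ 0 :=
      prod_ne_zero_iff.2 fun k _ h => h1 k (by linear_combination h)
    have h' : ∏ k, (-1 - x k) = (-1) ^ (n + 1) * ∏ k, (1 + x k) := by
      rw [← Fin.prod_const, ← prod_mul_distrib]
      exact prod_congr rfl fun k _ => by ring
    simp only [Fin.zero_succAbove, Fin.prod_univ_succ (n := n + 1), v, Fin.cons_zero, Fin.cons_succ,
      h', neg_one_mul, sub_neg_eq_add, sub_zero]
    rw [div_eq_iff (by simp [h]), pow_succ]
    linear_combination (-∏ k, (1 + x k)) * hsq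
  have e1 : (∏ k, (1 - v (Fin.succ 0) * x k)) /
      ∏ k, (v (Fin.succ 0) - v ((Fin.succ 0 : Fin (n + 3)).succAbove k)) =
        -(-1) ^ n / ∏ k, x k := by
    have h' : ∏ k, (-x k) = (-1) ^ (n + 1) * ∏ k, x k := by
      rw [← Fin.prod_const, ← prod_mul_distrib]
      exact prod_congr rfl fun k _ => by ring
    rw [Fin.prod_univ_succ (n := n + 1)]
    simp only [Fin.succ_succAbove_zero, Fin.succ_succAbove_succ, Fin.zero_succAbove, v,
      Fin.cons_zero, Fin.cons_succ, zero_sub, h', zero_mul, sub_zero, prod_const_one, neg_neg,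
      one_mul]
    rw [div_eq_div_iff (by simp [hX]) hX, pow_succ]
    linear_combination (-∏ k, x k) * hsq
  have e2 : ∀ i : Fin (n + 1), (∏ k, (1 - v i.succ.succ * x k)) /
      ∏ k, (v i.succ.succ - v (i.succ.succ.succAbove k)) =
        (-1) ^ n * ((1 - x i) * ∏ k : Fin n, (x (i.succAbove k) * (1 - x i * x (i.succAbove k)) /
          (x (i.succAbove k) - x i))) / ∏ k, x k := by
    intro i
    have hne : ∏ k, (x (i.succAbove k) - x i) ≠ 0 :=
      prod_ne_zero_iff.2 fun k _ => sub_ne_zero.2 (hinj.ne (Fin.succAbove_ne i k))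
    have h' : ∏ k, (x i - x (i.succAbove k)) = (-1) ^ n * ∏ k, (x (i.succAbove k) - x i) := by
      rw [← Fin.prod_const, ← prod_mul_distrib]
      exact prod_congr rfl fun k _ => by ring
    have hX' : ∏ k, x (i.succAbove k) ≠ 0 := prod_ne_zero_iff.2 fun k _ => h0 _
    have h1' : x i + 1 ≠ 0 := fun h => h1 i (by linear_combination h)
    have hp : ∏ k, (v i.succ.succ - v (i.succ.succ.succAbove k)) =
        (x i + 1) * (x i * ((-1) ^ n * ∏ k, (x (i.succAbove k) - x i))) := by
      rw [← h', Fin.prod_univ_succ (n := n + 1), Fin.prod_univ_succ (n := n)]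
      simp only [Fin.succ_succAbove_zero, Fin.succ_succAbove_succ, v, Fin.cons_zero, Fin.cons_succ,
        sub_neg_eq_add, sub_zero]
    have hvi : v i.succ.succ = x i := rfl
    rw [hp, hvi, Fin.prod_univ_succAbove _ i, Fin.prod_univ_succAbove x i, prod_div_distrib,
      prod_mul_distrib]
    have hi := h0 i
    have hs0 : (-1 : K) ^ n ≠ 0 := by simp
    field_simp
    linear_combination (-(1 - x i ^ 2) * ∏ k, (1 - x i * x (i.succAbove k))) * hsq
  simp only [e0, e1, e2, ← sum_div, ← mul_sum] at key
  have hs0 : (-1 : K) ^ n ≠ 0 := by simp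
  field_simp at key
  rw [zero_mul, zero_eq_mul, or_iff_right hs0] at key
  linear_combination key

theorem prod_Ioi_succAbove {M : Type*} [CommMonoid M] {n : ℕ} (p : Fin (n + 1))
    (f : Fin (n + 1) → Fin (n + 1) → M) :
    ∏ i, ∏ j ∈ Ioi i, f i j =
      (∏ a, if a.castSucc < p then f (p.succAbove a) p else f p (p.succAbove a)) *
        ∏ a : Fin n, ∏ b ∈ Ioi a, f (p.succAbove a) (p.succAbove b) := by
  have h : ∀ (m : ℕ) (g : Fin m → Fin m → M),
      ∏ i, ∏ j ∈ Ioi i, g i j = ∏ i, ∏ j, if i < j then g i j else 1 := by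
    intro m g
    refine prod_congr rfl fun i _ => ?_
    rw [← prod_filter]
    congr 1
    ext; simp
  simp only [h]
  rw [Fin.prod_univ_succAbove _ p]
  simp only [Fin.prod_univ_succAbove _ p, prod_mul_distrib, lt_self_iff_false, if_false, one_mul,
    (Fin.strictMono_succAbove p).lt_iff_lt, ← mul_assoc]
  congr 1
  rw [← prod_mul_distrib]
  refine prod_congr rfl fun a _ => ?_
  by_cases ha : a.castSucc < p
  · simp [Fin.succAbove_of_castSucc_lt _ _ ha, ha, ha.not_gt]
  · simp [Fin.succAbove_of_le_castSucc _ _ (not_lt.1 ha), ha,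
      (not_lt.1 ha).trans_lt a.castSucc_lt_succ,
      ((not_lt.1 ha).trans_lt a.castSucc_lt_succ).not_gt]

theorem prod_ite_castSucc_lt {R : Type*} [CommRing R] {n : ℕ} (p : Fin (n + 1)) :
    (∏ a : Fin n, if a.castSucc < p then (-1 : R) else 1) = (-1) ^ (p : ℕ) := by
  rw [← prod_filter, prod_const]
  congr 1
  have : univ.filter (fun a : Fin n => a.castSucc < p) =
      univ.filter (fun a : Fin n => a.1 < p.1) := by
    ext; simp [Fin.lt_def]
  rw [this, Fin.card_filter_val_lt]
  omega

theorem prod_Ioi_sub_succAbove {R : Type*} [CommRing R] {n : ℕ} (p : Fin (n + 1))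
    (x : Fin (n + 1) → R) :
    ∏ i, ∏ j ∈ Ioi i, (x i - x j) = (-1) ^ (p : ℕ) * (∏ a, (x p - x (p.succAbove a))) *
      ∏ a : Fin n, ∏ b ∈ Ioi a, (x (p.succAbove a) - x (p.succAbove b)) := by
  rw [prod_Ioi_succAbove p fun i j => x i - x j]
  refine congrArg (· * _) ?_
  rw [← prod_ite_castSucc_lt p, ← prod_mul_distrib]
  refine prod_congr rfl fun a _ => ?_
  split_ifs <;> ring

/-- Expansion of an alternant along its last column. -/
theorem det_alternant_snoc {R : Type*} [CommRing R] {n : ℕ} (x : Fin (n + 1) → R) (k : ℕ)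
    (l : Fin n → ℕ) :
    Matrix.det (Matrix.of fun i j : Fin (n + 1) =>
        x i ^ ((Fin.snoc (fun a => l a + k) k : Fin (n + 1) → ℕ) j + (n + 1 - 1 - (j : ℕ)))) =
      (∏ i, x i) ^ k * ∑ i : Fin (n + 1), (-1) ^ ((i : ℕ) + n) * (∏ a, x (i.succAbove a)) *
        Matrix.det (Matrix.of fun a b : Fin n => x (i.succAbove a) ^ (l b + (n - 1 - (b : ℕ)))) := by
  have h : (Matrix.of fun i j : Fin (n + 1) =>
        x i ^ ((Fin.snoc (fun a => l a + k) k : Fin (n + 1) → ℕ) j + (n + 1 - 1 - (j : ℕ)))) =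
      Matrix.of fun i j => x i ^ k * (Matrix.of fun i j : Fin (n + 1) =>
        x i ^ ((Fin.snoc l 0 : Fin (n + 1) → ℕ) j + (n - (j : ℕ)))) i j := by
    ext i j
    simp only [Matrix.of_apply, ← pow_add]
    congr 1
    induction j using Fin.lastCases <;> simp; ring
  rw [h, Matrix.det_mul_column, prod_pow, Matrix.det_succ_column _ (Fin.last n)]
  congr 1
  refine sum_congr rfl fun i _ => ?_
  rw [mul_assoc, mul_assoc, ← Matrix.det_mul_column]
  simp only [Matrix.of_apply, Fin.snoc_last, Fin.val_last, tsub_self, add_zero, pow_zero, one_mul]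
  congr 2
  ext a b
  simp only [Matrix.submatrix_apply, Matrix.of_apply, Fin.succAbove_last, Fin.snoc_castSucc,
    Fin.val_castSucc, ← pow_succ']
  congr 1
  omega

/-- A partition with at most `n + 1` parts is its last part together with the partition with at
most `n` parts obtained by subtracting it from the others. -/
def antitoneSuccEquiv (n : ℕ) :
    ℕ × {l : Fin n → ℕ // ∀ i j : Fin n, i ≤ j → l j ≤ l i} ≃
      {l : Fin (n + 1) → ℕ // ∀ i j : Fin (n + 1), i ≤ j → l j ≤ l i} where
  toFun q := ⟨Fin.snoc (fun a => q.2.1 a + q.1) q.1, fun i j hij => by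
    induction j using Fin.lastCases with
    | last => induction i using Fin.lastCases <;> simp
    | cast j =>
      induction i using Fin.lastCases with
      | last => exact absurd hij (by simp [Fin.le_def])
      | cast i => simpa using q.2.2 i j (by simpa using hij)⟩
  invFun l := (l.1 (Fin.last n), ⟨fun a => l.1 a.castSucc - l.1 (Fin.last n), fun i j hij =>
    Nat.sub_le_sub_right (l.2 _ _ (by simpa using hij)) _⟩)
  left_inv q := by simp
  right_inv l := by
    ext j
    induction j using Fin.lastCases with
    | last => simp
    | cast j => simpa using Nat.sub_add_cancel (l.2 _ _ (Fin.le_last j.castSucc))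

theorem HasSum.mul_of_nonarchimedeanRing {α β R : Type*} [Ring R] [TopologicalSpace R]
    [NonarchimedeanRing R] {f : α → R} {g : β → R} {a b : R} (hf : HasSum f a)
    (hg : HasSum g b) : HasSum (fun i : α × β => f i.1 * g i.2) (a * b) := by
  let := IsTopologicalAddGroup.rightUniformSpace R
  have := isUniformAddGroup_of_addCommGroup (G := R)
  exact hf.mul_of_nonarchimedean hg

open scoped MvPowerSeries.WithPiTopology

theorem MvPowerSeries.nonarchimedeanRing {σ K : Type*} [CommRing K] [TopologicalSpace K]
    [DiscreteTopology K] : NonarchimedeanRing (MvPowerSeries σ K) where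
  is_nonarchimedean U hU := by
    obtain ⟨I, hI, h⟩ := (IsLinearTopology.hasBasis_ideal (R := MvPowerSeries σ K)).mem_iff.1 hU
    exact ⟨⟨I.toAddSubgroup, AddSubgroup.isOpen_of_mem_nhds _ hI⟩, h⟩

theorem MvPowerSeries.isUnit_one_sub {σ K : Type*} [CommRing K] {y : MvPowerSeries σ K}
    (hy : y.constantCoeff = 0) : IsUnit (1 - y) := by
  rw [MvPowerSeries.isUnit_iff_constantCoeff]
  simp [hy]

theorem sum_succAbove_alternant {R : Type*} [CommRing R] [IsDomain R] {n : ℕ}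
    (x : Fin (n + 1) → R) (hinj : Function.Injective x) (h0 : ∀ i, x i ≠ 0)
    (h1 : ∀ i, x i ≠ -1) :
    ∑ i : Fin (n + 1), (-1) ^ ((i : ℕ) + n) * (∏ a, x (i.succAbove a)) *
      ((∏ a : Fin n, ∏ b ∈ Ioi a, (x (i.succAbove a) - x (i.succAbove b))) *
        ((1 - x i) * ∏ a, (1 - x i * x (i.succAbove a)))) =
      (1 - ∏ i, x i) * ∏ i, ∏ j ∈ Ioi i, (x i - x j) := by
  let f := algebraMap R (FractionRing R)
  have hf : Function.Injective f := IsFractionRing.injective R (FractionRing R)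
  apply hf
  have key := sum_one_sub_mul_prod_mul_div_sub (fun i => f (x i)) (hf.comp hinj)
    (fun i => (map_ne_zero_iff f hf).2 (h0 i))
    (fun i h => h1 i (hf (by simpa using h)))
  simp only [map_mul, map_sub, map_one, map_sum, map_prod, map_pow, map_neg]
  rw [← key, sum_mul]
  refine sum_congr rfl fun i _ => ?_
  rw [prod_Ioi_sub_succAbove i fun i => f (x i)]
  have h' : ∏ k, (f (x i) - f (x (i.succAbove k))) =
      (-1) ^ n * ∏ k, (f (x (i.succAbove k)) - f (x i)) := by
    rw [← Fin.prod_const, ← prod_mul_distrib]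
    exact prod_congr rfl fun k _ => by ring
  have hne : ∏ k, (f (x (i.succAbove k)) - f (x i)) ≠ 0 :=
    prod_ne_zero_iff.2 fun k _ => sub_ne_zero.2 ((hf.comp hinj).ne (Fin.succAbove_ne i k))
  rw [h', prod_div_distrib, prod_mul_distrib]
  field_simp
  ring

/-- Littlewood's formula for distinct nonzero power series without constant term. -/
theorem hasSum_alternant {σ K : Type*} [Field K] [TopologicalSpace K] [DiscreteTopology K]
    (n : ℕ) (x : Fin n → MvPowerSeries σ K) (hinj : Function.Injective x) (h0 : ∀ i, x i ≠ 0)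
    (hc : ∀ i, (x i).constantCoeff = 0) :
    ∃ S, HasSum (fun l : {l : Fin n → ℕ // ∀ i j : Fin n, i ≤ j → l j ≤ l i} =>
        Matrix.det (Matrix.of fun i j : Fin n => x i ^ (l.1 j + (n - 1 - (j : ℕ))))) S ∧
      S * (∏ i, (1 - x i)) * ∏ i, ∏ j ∈ Ioi i, (1 - x i * x j) =
        ∏ i, ∏ j ∈ Ioi i, (x i - x j) := by
  induction n with
  | zero =>
    have : Unique {l : Fin 0 → ℕ // ∀ i j : Fin 0, i ≤ j → l j ≤ l i} :=
      ⟨⟨⟨Fin.elim0, fun i => i.elim0⟩⟩, fun _ => Subsingleton.elim _ _⟩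
    exact ⟨_, hasSum_unique _, by simp⟩
  | succ n ih =>
    have := MvPowerSeries.nonarchimedeanRing (σ := σ) (K := K)
    have : IsDomain (MvPowerSeries σ K) := NoZeroDivisors.to_isDomain _
    choose S hS hSP using fun i : Fin (n + 1) => ih (x ∘ i.succAbove)
      (hinj.comp Fin.succAbove_right_injective) (fun _ => h0 _) (fun _ => hc _)
    have hX : (∏ i, x i).constantCoeff = 0 := by
      rw [map_prod]
      exact prod_eq_zero (mem_univ 0) (hc 0)
    have hu : 1 - ∏ i, x i ≠ 0 := (MvPowerSeries.isUnit_one_sub hX).ne_zero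
    have hg := (MvPowerSeries.WithPiTopology.summable_pow_of_constantCoeff_eq_zero hX).hasSum
    have hgeom := MvPowerSeries.WithPiTopology.one_sub_mul_tsum_pow_of_constantCoeff_eq_zero hX
    have hsum := hg.mul_of_nonarchimedeanRing (hasSum_sum fun (i : Fin (n + 1)) (_ : i ∈ univ) =>
      (hS i).mul_left ((-1) ^ ((i : ℕ) + n) * (∏ a, x (i.succAbove a))))
    refine ⟨_, (antitoneSuccEquiv n).hasSum_iff.1 (hsum.congr_fun ?_), ?_⟩
    · rintro ⟨k, l⟩
      exact det_alternant_snoc x k l.1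
    · refine mul_left_cancel₀ hu ?_
      rw [← sum_succAbove_alternant x hinj h0]
      · rw [mul_assoc, mul_assoc, ← mul_assoc (1 - _), hgeom, one_mul, sum_mul]
        refine sum_congr rfl fun i _ => ?_
        have hSPi := hSP i
        simp only [Function.comp_apply] at hSPi
        rw [← hSPi, prod_Ioi_succAbove i fun i j => 1 - x i * x j, Fin.prod_univ_succAbove _ i]
        simp only [mul_comm (x _) (x i), ite_self]
        ring
      · intro i h
        have := hc i
        simp [h] at this

end AlternantSum

/-- **Littlewood's formula** `∑_λ s_λ = ∏ 1/(1-x_i) ∏_{i<j} 1/(1-x_i x_j)` with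
denominators cleared, as a convergent sum in `ℚ[[x_1,…,x_n]]` (with the product topology
coming from the discrete topology on the coefficients, so that convergence means that
each coefficient is eventually constant along partial sums).  Partitions with at most
`n` parts are encoded as antitone functions `Fin n → ℕ`; with 0-indexed `j`, the
exponent `λ_j + n - j` becomes `l j + (n - 1 - j)`. -/
theorem littlewood_sum_all_partitions (n : ℕ) (hn : 0 < n) :
    letI : TopologicalSpace ℚ := ⊥
    letI : TopologicalSpace (MvPowerSeries (Fin n) ℚ) :=
      inferInstanceAs (TopologicalSpace ((Fin n →₀ ℕ) → ℚ))
    HasSum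
      (fun l : {l : Fin n → ℕ // ∀ i j : Fin n, i ≤ j → l j ≤ l i} =>
        Matrix.det (Matrix.of fun i j : Fin n =>
            (MvPowerSeries.X i : MvPowerSeries (Fin n) ℚ) ^ (l.1 j + (n - 1 - (j : ℕ)))) *
          (∏ i : Fin n, (1 - MvPowerSeries.X i)) *
          ∏ i : Fin n, ∏ j ∈ Finset.Ioi i,
            (1 - MvPowerSeries.X i * MvPowerSeries.X j))
      (∏ i : Fin n, ∏ j ∈ Finset.Ioi i,
        (MvPowerSeries.X i - MvPowerSeries.X j)) := by
  let : TopologicalSpace ℚ := ⊥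
  have : DiscreteTopology ℚ := ⟨rfl⟩
  obtain ⟨S, hS, hP⟩ := hasSum_alternant n (fun i => (MvPowerSeries.X i : MvPowerSeries (Fin n) ℚ))
    (fun _ _ => MvPowerSeries.X_inj.1)
    (fun _ => nonZeroDivisors.ne_zero MvPowerSeries.X_mem_nonzeroDivisors)
    MvPowerSeries.constantCoeff_X
  rw [← hP]
  open scoped MvPowerSeries.WithPiTopology in
  exact (hS.mul_right _).mul_right _
end
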